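/- arXiv:2312.14893 — 2 statements merged into one kernel-verified Lean document; each statement's English description precedes it below -/
import Mathlib

section
/- Let k be a field of characteristic zero, A a k-vector space, and (A, μ, δ) an infinitesimal bialgebra that is balanced. Define [a,b] := ab − ba and δ̄ := δ − τ∘δ, with δ̄(x) = Σ x̄₍₁₎ ⊗ x̄₍₂₎. Then the Lie-bialgebra 1-cocycle condition holds: for all a, b ∈ A, δ̄([a,b]) = Σ([a,b̄₍₁₎]⊗b̄₍₂₎ + b̄₍₁₎⊗[a,b̄₍₂₎]) − Σ([b,ā₍₁₎]⊗ā₍₂₎ + ā₍₁₎⊗[b,ā₍₂₎]). -/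
/-!
Write `τ` for the flip. Since `ad a ⊗ 1 + 1 ⊗ ad a` commutes with `τ`, both sides of the cocycle
condition lie in the image of `1 - τ`. After expanding `δ(ab) - δ(ba)` by the Leibniz rule, the
right side minus the left side is `1 - τ` applied to
`Σ b₁ ⊗ ab₂ - Σ b₁a ⊗ b₂ + Σ a₁b ⊗ a₂ - Σ a₁ ⊗ ba₂`. Because `(1 - τ) ∘ τ = -(1 - τ)`, the last two
terms may be replaced by `Σ ba₂ ⊗ a₁ - Σ a₂ ⊗ a₁b`, and the argument of `1 - τ` becomes the
difference of the two sides of the balanced condition, which vanishes.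
-/

open TensorProduct

/-- The anti-symmetrization `δ̄ = δ - τ∘δ` of a coproduct `δ`. -/
noncomputable def deltaBar (k : Type*) [Field k] (A : Type*) [AddCommGroup A] [Module k A]
    (δ : A →ₗ[k] A ⊗[k] A) : A →ₗ[k] A ⊗[k] A :=
  δ - (TensorProduct.comm k A A).toLinearMap ∘ₗ δ

/-- For a balanced infinitesimal bialgebra `(A, μ, δ)`, the anti-symmetrized structures
`[a,b] = ab − ba` and `δ̄ = δ − τ∘δ` satisfy the Lie-bialgebra 1-cocycle condition. -/
theorem balanced_infinitesimal_bialgebra_cocycle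
    (k : Type*) [Field k] [CharZero k]
    (A : Type*) [AddCommGroup A] [Module k A]
    (μ : A →ₗ[k] A →ₗ[k] A) (δ : A →ₗ[k] A ⊗[k] A)
    -- associativity of the product
    (hassoc : ∀ a b c : A, μ (μ a b) c = μ a (μ b c))
    -- coassociativity of the coproduct: (δ⊗id)∘δ = (id⊗δ)∘δ
    (hcoassoc : ∀ a : A,
      TensorProduct.assoc k A A A
          (TensorProduct.map δ (LinearMap.id : A →ₗ[k] A) (δ a))
        = TensorProduct.map (LinearMap.id : A →ₗ[k] A) δ (δ a))
    -- Leibniz rule: δ(ab) = Σ a₍₁₎ ⊗ (a₍₂₎b) + Σ (ab₍₁₎) ⊗ b₍₂₎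
    (hLeib : ∀ a b : A,
      δ (μ a b) = TensorProduct.map (LinearMap.id : A →ₗ[k] A) (μ.flip b) (δ a)
        + TensorProduct.map (μ a) (LinearMap.id : A →ₗ[k] A) (δ b))
    -- balanced condition:
    -- Σ (ba₍₂₎)⊗a₍₁₎ + Σ b₍₁₎⊗(ab₍₂₎) = Σ a₍₂₎⊗(a₍₁₎b) + Σ (b₍₁₎a)⊗b₍₂₎
    (hbal : ∀ a b : A,
      TensorProduct.comm k A A
          (TensorProduct.map (LinearMap.id : A →ₗ[k] A) (μ b) (δ a))
        + TensorProduct.map (LinearMap.id : A →ₗ[k] A) (μ a) (δ b)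
      = TensorProduct.comm k A A
          (TensorProduct.map (μ.flip b) (LinearMap.id : A →ₗ[k] A) (δ a))
        + TensorProduct.map (μ.flip a) (LinearMap.id : A →ₗ[k] A) (δ b)) :
    -- the 1-cocycle condition:
    -- δ̄([a,b]) = Σ([a,b̄₍₁₎]⊗b̄₍₂₎ + b̄₍₁₎⊗[a,b̄₍₂₎]) − Σ([b,ā₍₁₎]⊗ā₍₂₎ + ā₍₁₎⊗[b,ā₍₂₎])
    ∀ a b : A,
      deltaBar k A δ (μ a b - μ b a)
      = (TensorProduct.map (μ a - μ.flip a) (LinearMap.id : A →ₗ[k] A)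
          + TensorProduct.map (LinearMap.id : A →ₗ[k] A) (μ a - μ.flip a))
            (deltaBar k A δ b)
        - (TensorProduct.map (μ b - μ.flip b) (LinearMap.id : A →ₗ[k] A)
          + TensorProduct.map (LinearMap.id : A →ₗ[k] A) (μ b - μ.flip b))
            (deltaBar k A δ a) := by
  intro a b
  have map_flip : ∀ (f g : A →ₗ[k] A) (x : A ⊗[k] A),
      TensorProduct.map f g (TensorProduct.comm k A A x)
        = TensorProduct.comm k A A (TensorProduct.map g f x) :=
    fun f g x => TensorProduct.map_comm f g x
  have flip_flip : ∀ x : A ⊗[k] A,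
      TensorProduct.comm k A A (TensorProduct.comm k A A x) = x :=
    fun x => (TensorProduct.comm k A A).symm_apply_apply x
  have map_sub_id : ∀ (f g : A →ₗ[k] A),
      TensorProduct.map (f - g) (LinearMap.id : A →ₗ[k] A)
        = TensorProduct.map f LinearMap.id - TensorProduct.map g LinearMap.id :=
    LinearMap.rTensor_sub
  have map_id_sub : ∀ (f g : A →ₗ[k] A),
      TensorProduct.map (LinearMap.id : A →ₗ[k] A) (f - g)
        = TensorProduct.map LinearMap.id f - TensorProduct.map LinearMap.id g :=
    LinearMap.lTensor_sub
  have h := hbal a b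
  have hflip := congrArg (TensorProduct.comm k A A) h
  simp only [map_add, flip_flip] at hflip
  simp only [deltaBar, LinearMap.sub_apply, LinearMap.add_apply, LinearMap.comp_apply,
    LinearEquiv.coe_coe, map_sub, map_add, hLeib, map_sub_id, map_id_sub, map_flip]
  linear_combination (norm := abel) hflip - h
end

section
/- Let k be a field of characteristic zero, A a k-vector space, μ a k-bilinear product (a,b) ↦ ab on A and δ : A → A⊗A a k-linear coproduct satisfying only the infinitesimal Leibniz rule δ(ab) = Σ a₍₁₎ ⊗ (a₍₂₎b) + Σ (ab₍₁₎) ⊗ b₍₂₎. Define [a,b] := ab − ba, δ̄ := δ − τ∘δ (with δ̄(x) = Σ x̄₍₁₎⊗x̄₍₂₎), and the balanced obstruction B(a,b) := Σ (ba₍₂₎) ⊗ a₍₁₎ + Σ b₍₁₎ ⊗ (ab₍₂₎) − Σ a₍₂₎ ⊗ (a₍₁₎b) − Σ (b₍₁₎a) ⊗ b₍₂₎ ∈ A⊗A. Then for all a,b ∈ A: δ̄([a,b]) − Σ([a,b̄₍₁₎]⊗b̄₍₂₎ + b̄₍₁₎⊗[a,b̄₍₂₎]) + Σ([b,ā₍₁₎]⊗ā₍₂₎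 + ā₍₁₎⊗[b,ā₍₂₎]) = τ(B(a,b)) − B(a,b). -/
/-!
Write `L`, `R` for left and right multiplication. The Leibniz rule expands `δ(ab)` and `δ(ba)`
into terms `(1 ⊗ L)`, `(1 ⊗ R)`, `(L ⊗ 1)`, `(R ⊗ 1)` applied to `δ a` or `δ b`, and
naturality of the flip (`flip_map_apply`) moves every `τ` inside, onto `δ a` or `δ b`. Both sides
are then integer combinations of the same elements of `A ⊗ A`, and the identity holds in the
free abelian group on them: the terms coming from `δ̄([a,b])` all cancel against half of the
adjoint-action terms, and the other half is `τ(B(a,b)) - B(a,b)`. No associativity is involved.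
-/

open TensorProduct

/-- The balanced obstruction
`B(a,b) = Σ (ba₍₂₎)⊗a₍₁₎ + Σ b₍₁₎⊗(ab₍₂₎) − Σ a₍₂₎⊗(a₍₁₎b) − Σ (b₍₁₎a)⊗b₍₂₎ ∈ A⊗A`. -/
noncomputable def balObstruction (k : Type*) [Field k]
    (A : Type*) [AddCommGroup A] [Module k A]
    (μ : A →ₗ[k] A →ₗ[k] A) (δ : A →ₗ[k] A ⊗[k] A) (a b : A) : A ⊗[k] A :=
  TensorProduct.comm k A A
      (TensorProduct.map (LinearMap.id : A →ₗ[k] A) (μ b) (δ a))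
    + TensorProduct.map (LinearMap.id : A →ₗ[k] A) (μ a) (δ b)
    - TensorProduct.comm k A A
        (TensorProduct.map (μ.flip b) (LinearMap.id : A →ₗ[k] A) (δ a))
    - TensorProduct.map (μ.flip a) (LinearMap.id : A →ₗ[k] A) (δ b)

/-- Naturality of the flip: `τ ∘ (f ⊗ g) = (g ⊗ f) ∘ τ`. -/
theorem flip_map_apply {k A : Type*} [Field k] [AddCommGroup A] [Module k A]
    (f g : A →ₗ[k] A) (x : A ⊗[k] A) :
    TensorProduct.comm k A A (TensorProduct.map f g x)
      = TensorProduct.map g f (TensorProduct.comm k A A x) := by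
  induction x with
  | zero => simp
  | tmul x y => simp
  | add x y hx hy => simp only [map_add, hx, hy]

theorem map_sub_id_apply {k A : Type*} [Field k] [AddCommGroup A] [Module k A]
    (f g : A →ₗ[k] A) (x : A ⊗[k] A) :
    TensorProduct.map (f - g) (LinearMap.id : A →ₗ[k] A) x
      = TensorProduct.map f LinearMap.id x - TensorProduct.map g LinearMap.id x :=
  LinearMap.congr_fun (LinearMap.rTensor_sub (Q := A) f g) x

theorem map_id_sub_apply {k A : Type*} [Field k] [AddCommGroup A] [Module k A]
    (f g : A →ₗ[k] A) (x : A ⊗[k] A) :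
    TensorProduct.map (LinearMap.id : A →ₗ[k] A) (f - g) x
      = TensorProduct.map LinearMap.id f x - TensorProduct.map LinearMap.id g x :=
  LinearMap.congr_fun (LinearMap.lTensor_sub (M := A) f g) x

/-- If `(A, μ, δ)` satisfies only the infinitesimal Leibniz rule, then the failure of the
Lie-bialgebra 1-cocycle condition for `[a,b] = ab − ba` and `δ̄ = δ − τ∘δ` equals
`τ(B(a,b)) − B(a,b)`, where `B` is the balanced obstruction. -/
theorem cocycle_defect_is_antisymmetrized_balanced_obstruction
    (k : Type*) [Field k] [CharZero k]
    (A : Type*) [AddCommGroup A] [Module k A]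
    (μ : A →ₗ[k] A →ₗ[k] A) (δ : A →ₗ[k] A ⊗[k] A)
    -- Leibniz rule: δ(ab) = Σ a₍₁₎ ⊗ (a₍₂₎b) + Σ (ab₍₁₎) ⊗ b₍₂₎
    (hLeib : ∀ a b : A,
      δ (μ a b) = TensorProduct.map (LinearMap.id : A →ₗ[k] A) (μ.flip b) (δ a)
        + TensorProduct.map (μ a) (LinearMap.id : A →ₗ[k] A) (δ b)) :
    ∀ a b : A,
      deltaBar k A δ (μ a b - μ b a)
        - ((TensorProduct.map (μ a - μ.flip a) (LinearMap.id : A →ₗ[k] A)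
            + TensorProduct.map (LinearMap.id : A →ₗ[k] A) (μ a - μ.flip a))
              (deltaBar k A δ b))
        + ((TensorProduct.map (μ b - μ.flip b) (LinearMap.id : A →ₗ[k] A)
            + TensorProduct.map (LinearMap.id : A →ₗ[k] A) (μ b - μ.flip b))
              (deltaBar k A δ a))
      = TensorProduct.comm k A A (balObstruction k A μ δ a b)
          - balObstruction k A μ δ a b := by
  intro a b
  have hcc : ∀ x : A ⊗[k] A, TensorProduct.comm k A A (TensorProduct.comm k A A x) = x :=
    (TensorProduct.comm k A A).symm_apply_apply
  simp only [deltaBar, balObstruction, LinearMap.sub_apply, LinearMap.add_apply,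
    LinearMap.comp_apply, LinearEquiv.coe_coe, map_sub, map_add, hLeib, flip_map_apply,
    map_sub_id_apply, map_id_sub_apply, hcc]
  abel
end
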